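/- The formal Brieskorn lattice is ⟨s⟩-adically separated: ⋂_{k ≥ 0} (s^k·A + M) = M; equivalently, ⋂_{k ≥ 0} s^k·H = 0 in H = A/M. -/

import Mathlib

noncomputable section

open scoped Pointwise

/-- The formal partial derivative `∂ᵢ` with respect to the `i`th variable, determined by
`coeff α (∂ᵢ g) = (α i + 1) • coeff (α + eᵢ) g`. -/
def pd {σ : Type*} (i : σ) (g : MvPowerSeries σ ℂ) : MvPowerSeries σ ℂ :=
  fun α => ((α i : ℂ) + 1) * MvPowerSeries.coeff (α + Finsupp.single i 1) g

lemma coeff_pd {σ : Type*} (i : σ) (g : MvPowerSeries σ ℂ) (α : σ →₀ ℕ) :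
    MvPowerSeries.coeff α (pd i g) =
      ((α i : ℂ) + 1) * MvPowerSeries.coeff (α + Finsupp.single i 1) g := rfl

variable (n : ℕ)

/-- `R = ℂ[[x₁,…,xₙ]]`. -/
abbrev R' := MvPowerSeries (Fin n) ℂ

/-- `A = ℂ[[s,x₁,…,xₙ]]`, where `s` is the 0th variable and `xᵢ` is the variable
of index `i` (`1 ≤ i ≤ n`). -/
abbrev A' := MvPowerSeries (Fin (n + 1)) ℂ

/-- The variable `s` of `A`. -/
def sv : A' n := MvPowerSeries.X 0

/-- Forget the `s`-exponent of a multi-index of `A`. -/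
def tailF (β : Fin (n + 1) →₀ ℕ) : Fin n →₀ ℕ :=
  Finsupp.equivFunOnFinite.symm fun i => β i.succ

/-- The inclusion `R ⊆ A` as the subring of series not involving `s`. -/
def inclR (g : R' n) : A' n :=
  fun β => if β 0 = 0 then MvPowerSeries.coeff (tailF n β) g else 0

/-- The inclusion `ℂ[[s]] ⊆ A` as the subring of series in `s` alone. -/
def toA (p : PowerSeries ℂ) : A' n :=
  fun β => if tailF n β = 0 then PowerSeries.coeff (β 0) p else 0

lemma coeff_inclR (g : R' n) (β : Fin (n + 1) →₀ ℕ) :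
    MvPowerSeries.coeff β (inclR n g) =
      if β 0 = 0 then MvPowerSeries.coeff (tailF n β) g else 0 := rfl

/-- The `ℂ[[s]]`-linear operator `Fᵢ(g) = ∂ᵢ(f)·g − s·∂ᵢ(g)` on `A`. -/
def FF (f : R' n) (i : Fin n) (g : A' n) : A' n :=
  inclR n (pd i f) * g - sv n * pd i.succ g

/-- `M = range F₁ + ⋯ + range Fₙ`, so that `H = A/M` is the formal Brieskorn lattice. -/
def Mset (f : R' n) : Set (A' n) :=
  {a | ∃ q : Fin n → A' n, a = ∑ i, FF n f i (q i)}

/-- The Jacobian ideal `J(f) = ⟨∂₁f,…,∂ₙf⟩` of `R`. -/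
def Jf (f : R' n) : Ideal (R' n) :=
  Ideal.span (Set.range fun i : Fin n => pd i f)

/-- The maximal ideal `⟨x₁,…,xₙ⟩` of `R = ℂ[[x₁,…,xₙ]]`. -/
def mx : Ideal (R' n) :=
  Ideal.span (Set.range (MvPowerSeries.X : Fin n → R' n))

/-- The ideal `J(f)·A` of `A` generated by `∂₁(f),…,∂ₙ(f)`. -/
def JA (f : R' n) : Ideal (A' n) :=
  Ideal.span (Set.range fun i : Fin n => inclR n (pd i f))

/-- The ideal `⟨x₁,…,xₙ⟩·A` of `A` generated by the variables `x₁,…,xₙ` (not `s`). -/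
def XA : Ideal (A' n) :=
  Ideal.span (Set.range fun i : Fin n => (MvPowerSeries.X i.succ : A' n))

lemma pd_add {σ : Type*} (i : σ) (a b : MvPowerSeries σ ℂ) :
    pd i (a + b) = pd i a + pd i b := by
  ext α; simp [coeff_pd, mul_add]

lemma pd_smul {σ : Type*} (i : σ) (c : ℂ) (a : MvPowerSeries σ ℂ) :
    pd i (c • a) = c • pd i a := by
  ext α; simp [coeff_pd]; ring

lemma FF_add (f : R' n) (i : Fin n) (a b : A' n) :
    FF n f i (a + b) = FF n f i a + FF n f i b := by
  simp only [FF, pd_add, mul_add]; ring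

lemma FF_smul (f : R' n) (i : Fin n) (c : ℂ) (a : A' n) :
    FF n f i (c • a) = c • FF n f i a := by
  simp only [FF, pd_smul, Algebra.mul_smul_comm, smul_sub]

lemma FF_zero (f : R' n) (i : Fin n) : FF n f i 0 = 0 := by
  simpa using FF_smul n f i 0 0

/-- `M` as a `ℂ`-submodule of `A`. -/
def Msub (f : R' n) : Submodule ℂ (A' n) where
  carrier := Mset n f
  zero_mem' := ⟨0, by simp [FF_zero]⟩
  add_mem' := by
    rintro a b ⟨q, rfl⟩ ⟨q', rfl⟩
    exact ⟨q + q', by simp [FF_add, Finset.sum_add_distrib]⟩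
  smul_mem' := by
    rintro c a ⟨q, rfl⟩
    exact ⟨c • q, by simp [FF_smul, Finset.smul_sum]⟩

/-- The inclusion `R ⊆ A` as a `ℂ`-linear map. -/
def inclL : R' n →ₗ[ℂ] A' n where
  toFun := inclR n
  map_add' a b := by
    ext β; simp only [coeff_inclR, map_add]; split <;> simp
  map_smul' c a := by
    ext β; simp only [coeff_inclR, map_smul, RingHom.id_apply]; split <;> simp

lemma bl_inclR_eq (g : R' n) :
    inclR n g = (MvPowerSeries.finSuccEquiv ℂ n).symm (PowerSeries.C g) := by
  apply (MvPowerSeries.finSuccEquiv ℂ n).injective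
  rw [AlgEquiv.apply_symm_apply]
  ext k x
  rw [MvPowerSeries.coeff_coeff_finSuccEquiv, coeff_inclR, PowerSeries.coeff_C]
  have ht : tailF n (Finsupp.cons k x) = x := by
    ext i; simp [tailF]
  by_cases hk : k = 0
  · simp [hk] at ht ⊢
    rw [ht]
  · simp [hk]

lemma bl_inclR_mul (a b : R' n) : inclR n (a * b) = inclR n a * inclR n b := by
  simp [bl_inclR_eq]

lemma bl_inclR_sum {ι : Type*} (s : Finset ι) (a : ι → R' n) :
    inclR n (∑ i ∈ s, a i) = ∑ i ∈ s, inclR n (a i) := by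
  simp [bl_inclR_eq]

lemma bl_inclR_add (a b : R' n) : inclR n (a + b) = inclR n a + inclR n b := by
  simp [bl_inclR_eq]

lemma bl_inclR_smul (c : ℂ) (b : R' n) :
    inclR n (c • b) = MvPowerSeries.C c * inclR n b := by
  rw [← MvPowerSeries.smul_eq_C_mul]
  exact (inclL n).map_smul c b

lemma bl_pd_eq {σ : Type*} (i : σ) (g : MvPowerSeries σ ℂ) :
    pd i g = MvPowerSeries.pderiv ℂ i g := by
  ext α
  rw [coeff_pd, MvPowerSeries.coeff_pderiv, mul_comm]

/-- An element divisible by all powers of `s` vanishes. -/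
lemma bl_eq_zero (D : A' n) (h : ∀ N : ℕ, sv n ^ N ∣ D) : D = 0 := by
  ext β
  exact MvPowerSeries.X_pow_dvd_iff.1 (h (β 0 + 1)) β (by omega)

lemma bl_decomp_sv (a : A' n) : ∃ (r : R' n) (a' : A' n), a = inclR n r + sv n * a' := by
  set e := MvPowerSeries.finSuccEquiv ℂ n
  refine ⟨PowerSeries.constantCoeff (e a),
    e.symm (PowerSeries.mk fun p => PowerSeries.coeff (p + 1) (e a)), ?_⟩
  apply e.injective
  conv_lhs => rw [PowerSeries.eq_X_mul_shift_add_const (e a)]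
  rw [map_add, map_mul, bl_inclR_eq]
  simp only [e, sv, MvPowerSeries.finSuccEquiv_X_zero, AlgEquiv.apply_symm_apply]
  rw [add_comm]

/-- The inclusion of `ℂ[[s]]` in `A` as a ring homomorphism. -/
def blPhi : PowerSeries ℂ →+* A' n :=
  (PowerSeries.toMvPowerSeries (R := ℂ) (0 : Fin (n + 1))).toRingHom

lemma blPhi_X : blPhi n PowerSeries.X = sv n :=
  PowerSeries.toMvPowerSeries_X (R := ℂ) (0 : Fin (n + 1))

lemma blPhi_C (c : ℂ) : blPhi n (PowerSeries.C c) = MvPowerSeries.C c :=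
  PowerSeries.toMvPowerSeries_C (R := ℂ) (0 : Fin (n + 1)) (r := c)

lemma bl_pd_sv_mul (i : Fin n) (g : A' n) :
    pd i.succ (sv n * g) = sv n * pd i.succ g := by
  simp only [bl_pd_eq, sv]
  rw [Derivation.leibniz, MvPowerSeries.pderiv_X_of_ne (Fin.succ_ne_zero i).symm]
  simp

lemma bl_pd_phi (i : Fin n) (p : PowerSeries ℂ) : pd i.succ (blPhi n p) = 0 := by
  apply bl_eq_zero
  intro N
  induction N generalizing p with
  | zero => simp
  | succ N ih =>
    rw [PowerSeries.eq_X_mul_shift_add_const p, map_add, map_mul, blPhi_X, blPhi_C, pd_add,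
      bl_pd_sv_mul, bl_pd_eq i.succ (MvPowerSeries.C _), MvPowerSeries.pderiv_C, add_zero, pow_succ']
    exact mul_dvd_mul_left _ (ih _)

lemma bl_FF_phi (f : R' n) (i : Fin n) (p : PowerSeries ℂ) (g : A' n) :
    FF n f i (blPhi n p * g) = blPhi n p * FF n f i g := by
  have h := bl_pd_phi n i p
  simp only [FF, bl_pd_eq] at h ⊢
  rw [Derivation.leibniz, h]
  simp only [smul_eq_mul, mul_zero, add_zero]
  ring

lemma bl_FF_sv (f : R' n) (i : Fin n) (g : A' n) :
    FF n f i (sv n * g) = sv n * FF n f i g := by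
  rw [← blPhi_X, bl_FF_phi]

/-- Series with vanishing constant term lie in the ideal of the variables. -/
lemma bl_mem_mx (g : R' n) (hg : MvPowerSeries.constantCoeff g = 0) : g ∈ mx n := by
  classical
  have key : ∀ s : Finset (Fin n), ∃ h ∈ mx n, ∀ β : Fin n →₀ ℕ,
      (β = 0 ∨ ∃ i ∈ s, β i ≠ 0) → MvPowerSeries.coeff β (g - h) = 0 := by
    intro s
    induction s using Finset.induction_on with
    | empty =>
      refine ⟨0, Submodule.zero_mem _, ?_⟩
      rintro β (rfl | ⟨i, hi, _⟩)
      · simpa using hg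
      · simp at hi
    | insert i s his ih =>
      obtain ⟨h, hh, hz⟩ := ih
      let rest : R' n := fun β => if β i = 0 then MvPowerSeries.coeff β (g - h) else 0
      have hrest : ∀ β, MvPowerSeries.coeff β rest =
        if β i = 0 then MvPowerSeries.coeff β (g - h) else 0 := fun β => rfl
      have hd : (MvPowerSeries.X i : R' n) ∣ g - h - rest := by
        rw [MvPowerSeries.X_dvd_iff]
        intro β hβ
        rw [map_sub _ (g - h), hrest, if_pos hβ, sub_self]
      refine ⟨h + (g - h - rest), Submodule.add_mem _ hh ?_, ?_⟩
      · obtain ⟨u, hu⟩ := hd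
        rw [hu]
        exact Ideal.mul_mem_right _ _ (Ideal.subset_span ⟨i, rfl⟩)
      · intro β hβ
        have : g - (h + (g - h - rest)) = rest := by ring
        rw [this, hrest]
        split_ifs with h0
        · apply hz
          rcases hβ with hβ | ⟨j, hj, hj0⟩
          · exact Or.inl hβ
          · rcases Finset.mem_insert.1 hj with rfl | hj
            · exact absurd h0 hj0
            · exact Or.inr ⟨j, hj, hj0⟩
        · rfl
  obtain ⟨h, hh, hz⟩ := key Finset.univ
  have : g - h = 0 := by
    ext β
    refine hz β ?_
    by_cases hβ : β = 0
    · exact Or.inl hβ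
    · obtain ⟨i, hi⟩ := Finsupp.ne_iff.1 hβ
      exact Or.inr ⟨i, Finset.mem_univ _, by simpa using hi⟩
  rw [sub_eq_zero.1 this]
  exact hh

/-- `R / ⟨x⟩^m` is finite dimensional over `ℂ`. -/
lemma bl_findim (m : ℕ) : ∃ G : Finset (R' n), ∀ r : R' n,
    ∃ v ∈ Submodule.span ℂ (G : Set (R' n)), r - v ∈ mx n ^ m := by
  classical
  induction m with
  | zero => exact ⟨∅, fun r => ⟨0, Submodule.zero_mem _, by simp⟩⟩
  | succ m ih =>
    obtain ⟨G, hG⟩ := ih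
    obtain ⟨T, hT⟩ := (isNoetherianRing_iff_ideal_fg (R' n)).1 inferInstance (mx n ^ m)
    have hT' : ∀ w ∈ mx n ^ m, ∃ v ∈ Submodule.span ℂ (T : Set (R' n)),
        w - v ∈ mx n ^ (m + 1) := by
      intro w hw
      rw [← hT] at hw
      induction hw using Submodule.span_induction with
      | mem x hx => exact ⟨x, Submodule.subset_span hx, by simp⟩
      | zero => exact ⟨0, Submodule.zero_mem _, by simp⟩
      | add x y _ _ hx hy =>
        obtain ⟨v, hv, hv'⟩ := hx
        obtain ⟨u, hu, hu'⟩ := hy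
        refine ⟨v + u, Submodule.add_mem _ hv hu, ?_⟩
        rw [add_sub_add_comm]
        exact Ideal.add_mem _ hv' hu'
      | smul a x hx' hx =>
        obtain ⟨v, hv, hv'⟩ := hx
        refine ⟨MvPowerSeries.constantCoeff a • v, Submodule.smul_mem _ _ hv, ?_⟩
        have h1 : a - MvPowerSeries.C (MvPowerSeries.constantCoeff a) ∈ mx n :=
          bl_mem_mx n _ (by simp)
        have h2 : x ∈ mx n ^ m := by rw [← hT]; exact hx'
        have h3 : a • x - MvPowerSeries.constantCoeff a • v =
            (a - MvPowerSeries.C (MvPowerSeries.constantCoeff a)) * x +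
            MvPowerSeries.C (MvPowerSeries.constantCoeff a) * (x - v) := by
          rw [MvPowerSeries.smul_eq_C_mul, smul_eq_mul]; ring
        rw [h3]
        refine Ideal.add_mem _ ?_ (Ideal.mul_mem_left _ _ hv')
        rw [pow_succ']
        exact Ideal.mul_mem_mul h1 h2
    refine ⟨G ∪ T, fun r => ?_⟩
    obtain ⟨v, hv, hv'⟩ := hG r
    obtain ⟨u, hu, hu'⟩ := hT' _ hv'
    refine ⟨v + u, ?_, by rwa [← sub_sub]⟩
    rw [Finset.coe_union, Submodule.span_union]
    exact Submodule.add_mem_sup hv hu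

/-- One step of the division algorithm. -/
lemma bl_step (f : R' n) (m : ℕ) (hiso : mx n ^ m ≤ Jf n f) :
    ∃ G : Finset (R' n), ∀ a : A' n, ∃ (c : R' n → ℂ) (q : Fin n → R' n) (a' : A' n),
      a = ∑ g ∈ G, MvPowerSeries.C (c g) * inclR n g + ∑ i, FF n f i (inclR n (q i))
        + sv n * a' := by
  obtain ⟨G, hG⟩ := bl_findim n m
  refine ⟨G, fun a => ?_⟩
  obtain ⟨r, b, hab⟩ := bl_decomp_sv n a
  obtain ⟨v, hv, hv'⟩ := hG r
  obtain ⟨c, _, hc⟩ := Submodule.mem_span_finset.1 hv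
  obtain ⟨q, hq⟩ := (Ideal.mem_span_range_iff_exists_fun).1 (hiso hv')
  refine ⟨c, q, b + ∑ i, pd i.succ (inclR n (q i)), ?_⟩
  have hr : r = ∑ g ∈ G, c g • g + ∑ i, q i * pd i f := by
    rw [hc, hq]; ring
  rw [hab, hr, bl_inclR_add, bl_inclR_sum, bl_inclR_sum]
  simp only [bl_inclR_smul, bl_inclR_mul, FF, Finset.sum_sub_distrib, mul_add, Finset.mul_sum,
    mul_comm (inclR n (q _))]
  ring

/-- `H` is generated over `ℂ[[s]]` by finitely many elements. -/
lemma bl_gen (f : R' n) (m : ℕ) (hiso : mx n ^ m ≤ Jf n f) :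
    ∃ G : Finset (R' n), ∀ a : A' n, ∃ (p : R' n → PowerSeries ℂ) (Q : Fin n → A' n),
      a = ∑ g ∈ G, blPhi n (p g) * inclR n g + ∑ i, FF n f i (Q i) := by
  obtain ⟨G, hG⟩ := bl_step n f m hiso
  refine ⟨G, fun a => ?_⟩
  choose c q t ht using hG
  let e := MvPowerSeries.finSuccEquiv ℂ n
  let P : A' n → R' n → PowerSeries ℂ := fun a g => PowerSeries.mk fun k => c (t^[k] a) g
  let Q : A' n → Fin n → A' n := fun a i =>
    e.symm (PowerSeries.mk fun k => q (t^[k] a) i)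
  have hP : ∀ a g, blPhi n (P a g) = MvPowerSeries.C (c a g) + sv n * blPhi n (P (t a) g) := by
    intro a g
    have : P a g = PowerSeries.C (c a g) + PowerSeries.X * P (t a) g := by
      rw [PowerSeries.eq_X_mul_shift_add_const (P a g), add_comm]
      simp [P]
    rw [this, map_add, map_mul, blPhi_X, blPhi_C]
  have hQ : ∀ a i, Q a i = inclR n (q a i) + sv n * Q (t a) i := by
    intro a i
    apply e.injective
    rw [map_add, map_mul, bl_inclR_eq]
    simp only [Q, e, sv, MvPowerSeries.finSuccEquiv_X_zero, AlgEquiv.apply_symm_apply]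
    rw [PowerSeries.eq_X_mul_shift_add_const (PowerSeries.mk fun k => q (t^[k] a) i), add_comm]
    simp
  let D : A' n → A' n := fun a =>
    a - (∑ g ∈ G, blPhi n (P a g) * inclR n g + ∑ i, FF n f i (Q a i))
  have hD : ∀ a, D a = sv n * D (t a) := by
    intro a
    have h := ht a
    have h1 : ∑ g ∈ G, blPhi n (P a g) * inclR n g =
        ∑ g ∈ G, MvPowerSeries.C (c a g) * inclR n g +
        sv n * ∑ g ∈ G, blPhi n (P (t a) g) * inclR n g := by
      rw [Finset.mul_sum, ← Finset.sum_add_distrib]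
      refine Finset.sum_congr rfl fun g _ => ?_
      rw [hP]; ring
    have h2 : ∑ i, FF n f i (Q a i) =
        ∑ i, FF n f i (inclR n (q a i)) + sv n * ∑ i, FF n f i (Q (t a) i) := by
      rw [Finset.mul_sum, ← Finset.sum_add_distrib]
      refine Finset.sum_congr rfl fun i _ => ?_
      rw [hQ, FF_add, bl_FF_sv]
    simp only [D]
    rw [h1, h2]
    linear_combination h
  have hdiv : ∀ N a, sv n ^ N ∣ D a := by
    intro N
    induction N with
    | zero => simp
    | succ N ih =>
      intro a
      rw [hD, pow_succ']
      exact mul_dvd_mul_left _ (ih _)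
  exact ⟨P a, Q a, sub_eq_zero.1 (bl_eq_zero n (D a) fun N => hdiv N a)⟩

/-- **The formal Brieskorn lattice is `⟨s⟩`-adically separated**:
`⋂ₖ (s^k·A + M) = M`, i.e. `⋂ₖ s^k·H = 0` in `H = A/M`. -/
theorem brieskorn_separated (n : ℕ) (hn : 1 ≤ n) (f : R' n)
    (hf0 : MvPowerSeries.constantCoeff f = 0)
    (m : ℕ) (hm : 1 ≤ m) (hiso : mx n ^ m ≤ Jf n f) :
    (⋂ k : ℕ, (((Ideal.span {sv n ^ k} : Ideal (A' n)) : Set (A' n)) + Mset n f)) =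
      Mset n f := by
  classical
  apply Set.Subset.antisymm
  · intro a ha
    letI : Module (PowerSeries ℂ) (A' n) := Module.compHom (A' n) (blPhi n)
    have hsmul : ∀ (p : PowerSeries ℂ) (b : A' n), p • b = blPhi n p * b := fun _ _ => rfl
    let M : Submodule (PowerSeries ℂ) (A' n) :=
      { carrier := Mset n f
        zero_mem' := (Msub n f).zero_mem
        add_mem' := fun ha hb => (Msub n f).add_mem ha hb
        smul_mem' := by
          rintro p b ⟨q, rfl⟩
          refine ⟨fun i => blPhi n p * q i, ?_⟩
          rw [hsmul, Finset.mul_sum]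
          exact Finset.sum_congr rfl fun i _ => (bl_FF_phi n f i p (q i)).symm }
    have hM : ∀ b, b ∈ M ↔ b ∈ Mset n f := fun _ => Iff.rfl
    obtain ⟨G, hG⟩ := bl_gen n f m hiso
    haveI : Module.Finite (PowerSeries ℂ) (A' n ⧸ M) := by
      refine ⟨⟨G.image fun g => M.mkQ (inclR n g), ?_⟩⟩
      rw [eq_top_iff]
      rintro x -
      obtain ⟨b, rfl⟩ := M.mkQ_surjective x
      obtain ⟨p, Q, hb⟩ := hG b
      have h0 : M.mkQ (∑ i, FF n f i (Q i)) = 0 := by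
        rw [Submodule.mkQ_apply, Submodule.Quotient.mk_eq_zero]
        exact ⟨Q, rfl⟩
      rw [hb, map_add, h0, add_zero, map_sum]
      refine Submodule.sum_mem _ fun g hg => ?_
      rw [← hsmul, map_smul]
      exact Submodule.smul_mem _ _ (Submodule.subset_span (by
        rw [Finset.coe_image]; exact ⟨g, hg, rfl⟩))
    have hK := Ideal.iInf_pow_smul_eq_bot_of_isLocalRing (M := A' n ⧸ M)
      (Ideal.span {(PowerSeries.X : PowerSeries ℂ)})
      (by
        rw [Ne, Ideal.span_singleton_eq_top]
        exact PowerSeries.X_prime.not_unit)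
    have hmem : M.mkQ a ∈ (⨅ k : ℕ, Ideal.span {(PowerSeries.X : PowerSeries ℂ)} ^ k •
        (⊤ : Submodule (PowerSeries ℂ) (A' n ⧸ M))) := by
      rw [Submodule.mem_iInf]
      intro k
      obtain ⟨u, hu, v, hv, huv⟩ := Set.mem_add.1 (Set.mem_iInter.1 ha k)
      obtain ⟨w, rfl⟩ := Ideal.mem_span_singleton.1 hu
      have h0 : M.mkQ v = 0 := by
        rw [Submodule.mkQ_apply, Submodule.Quotient.mk_eq_zero]
        exact hv
      have h1 : sv n ^ k * w = (PowerSeries.X ^ k : PowerSeries ℂ) • w := by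
        rw [hsmul, map_pow, blPhi_X]
      rw [← huv, map_add, h0, add_zero, h1, map_smul]
      exact Submodule.smul_mem_smul
        (Ideal.pow_mem_pow (Ideal.mem_span_singleton_self _) k) Submodule.mem_top
    rw [hK, Submodule.mem_bot, Submodule.mkQ_apply, Submodule.Quotient.mk_eq_zero] at hmem
    exact hmem
  · intro a ha
    refine Set.mem_iInter.2 fun k => ?_
    exact Set.mem_add.2 ⟨0, Submodule.zero_mem _, a, ha, zero_add a⟩
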